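/- Let (T,f) be a Hubbard tree, let z₁ be a characteristic periodic point of exact period m, and let G be a global arm at z₁. Then either f^k(G) does not contain c₀ for all 0 ≤ k < m (and in particular the first return map f^m maps G homeomorphically onto its image), or the first return map f^m sends the local arm contained in G to the local arm at z₁ pointing toward the critical point c₀ or to the local arm at z₁ pointing toward the critical value c₁. -/

import Mathlib

/- Common definitions for formalizing "Admissibility of kneading sequences and
structure of Hubbard trees for quadratic polynomials" by Bruin–Schleicher. -/

namespace HubbardTrees

/-- The symbols `0`, `1`, `*` used for itineraries and kneading sequences. -/
inductive Sym : Type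
  | zero : Sym
  | one : Sym
  | star : Sym
deriving DecidableEq

/-- `A` is an arc in `X` joining `x` and `y` (a point if `x = y`, otherwise a
homeomorphic image of `[0,1]` with endpoints `x` and `y`). -/
def IsArcBetween {X : Type*} [TopologicalSpace X] (A : Set X) (x y : X) : Prop :=
  (x = y ∧ A = {x}) ∨
  (x ≠ y ∧ ∃ γ : Path x y, Topology.IsEmbedding ⇑γ ∧ Set.range ⇑γ = A)

/-- The global arms at `x`: the connected components of `X \ {x}`. -/
def arms {X : Type*} [TopologicalSpace X] (x : X) : Set (Set X) :=
  {C | ∃ y, y ≠ x ∧ C = connectedComponentIn {x}ᶜ y}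

/-- The global arm at `x` containing `y` (for `y ≠ x`): the component of `X \ {x}`
containing `y`.  Local arms at `x` being germs of global arms, we represent the local
arm at `x` pointing towards `y` by this set. -/
def armTo {X : Type*} [TopologicalSpace X] (x y : X) : Set X :=
  connectedComponentIn {x}ᶜ y

/-- `x` is an endpoint: it has exactly one arm. -/
def IsEndpoint {X : Type*} [TopologicalSpace X] (x : X) : Prop :=
  (arms x).ncard = 1

/-- `x` is a branch point: it has at least three arms. -/
def IsBranchPt {X : Type*} [TopologicalSpace X] (x : X) : Prop :=
  3 ≤ (arms x).ncard

/-- `f` maps the set `A` homeomorphically onto its image. -/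
def MapsHomeoOn {X : Type*} [TopologicalSpace X] (f : X → X) (A : Set X) : Prop :=
  Topology.IsEmbedding (A.restrict f)

/-- `f` is a local homeomorphism onto its image at `x`. -/
def IsLocalHomeoAt {X : Type*} [TopologicalSpace X] (f : X → X) (x : X) : Prop :=
  ∃ U : Set X, IsOpen U ∧ x ∈ U ∧ Topology.IsEmbedding (U.restrict f)

/-- `g` sends the local arm at `x` represented by the global arm `C` to the local
arm at `g x` represented by `C'` (germ condition: some initial piece of `C` at `x`
is mapped into `C'`). -/
def MapsLocalArm {X : Type*} [TopologicalSpace X] (g : X → X) (x : X) (C C' : Set X) : Prop :=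
  C ∈ arms x ∧ C' ∈ arms (g x) ∧ ∃ U ∈ nhds x, g '' (C ∩ U) ⊆ C'

/-- `z` is periodic under `f` with exact period `n`. -/
def ExactPeriod {Y : Type*} (f : Y → Y) (z : Y) (n : ℕ) : Prop :=
  1 ≤ n ∧ f^[n] z = z ∧ ∀ k, 1 ≤ k → k < n → f^[k] z ≠ z

/-- The first return map `f^[n]` of the fixed point `z` of `f^[n]` permutes all the
local arms at `z` transitively in a single cycle. -/
def ArmsTransitive {X : Type*} [TopologicalSpace X] (f : X → X) (n : ℕ) (z : X) : Prop :=
  ∀ C ∈ arms z, ∀ C' ∈ arms z, ∃ j : ℕ, MapsLocalArm (f^[n * j]) z C C'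

/-- An (abstract) Hubbard tree: a finite topological tree `X` together with a
continuous surjection `f` and a critical point `c0`, subject to the axioms of
Bruin–Schleicher. -/
structure HubbardTree (X : Type*) [TopologicalSpace X] : Type _ where
  /-- the dynamics -/
  f : X → X
  /-- the critical point -/
  c0 : X
  compact : CompactSpace X
  t2 : T2Space X
  conn : ConnectedSpace X
  /-- the unique arc `[x,y]` joining two points -/
  arc : X → X → Set X
  arc_isArc : ∀ x y : X, IsArcBetween (arc x y) x y
  arc_unique : ∀ (x y : X) (A : Set X), IsArcBetween A x y → A = arc x y
  -- finiteness of the tree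
  arms_finite : ∀ x : X, (arms x).Finite
  branch_finite : Set.Finite {x : X | IsBranchPt x}
  endpoint_finite : Set.Finite {x : X | IsEndpoint x}
  cont : Continuous f
  surj : Function.Surjective f
  /-- every point has at most two inverse images -/
  two_preimages : ∀ y : X, ∃ a b : X, f ⁻¹' {y} ⊆ {a, b}
  /-- local homeomorphism onto its image away from the critical point -/
  local_homeo : ∀ x : X, x ≠ c0 → IsLocalHomeoAt f x
  /-- all endpoints lie on the critical orbit -/
  endpoints_on_orbit : ∀ x : X, IsEndpoint x → ∃ k : ℕ, f^[k] c0 = x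
  /-- the critical point is periodic or preperiodic -/
  crit_preperiodic : ∃ k n : ℕ, 1 ≤ n ∧ f^[k + n] c0 = f^[k] c0
  /-- the critical point is not fixed -/
  crit_not_fixed : f c0 ≠ c0
  /-- expansivity -/
  expansive : ∀ x y : X, x ≠ y →
    (IsBranchPt x ∨ ∃ k : ℕ, f^[k] c0 = x) →
    (IsBranchPt y ∨ ∃ k : ℕ, f^[k] c0 = y) →
    ∃ n : ℕ, c0 ∈ f^[n] '' (arc x y)

namespace HubbardTree

variable {X : Type*} [TopologicalSpace X] (H : HubbardTree X)

/-- The critical value `c₁ = f(c₀)`. -/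
def c1 : X := H.f H.c0

/-- The component `T₁` of `T \ {c₀}` containing the critical value. -/
def T1 : Set X := connectedComponentIn {H.c0}ᶜ H.c1

open Classical in
/-- The symbol (`0`, `1` or `*`) attached to a point of the tree. -/
noncomputable def symOf (x : X) : Sym :=
  if x = H.c0 then Sym.star else if x ∈ H.T1 then Sym.one else Sym.zero

/-- The itinerary of `x`: a sequence of symbols, 1-indexed (the value at index `0`
is irrelevant); entry `k ≥ 1` is the symbol of `f^[k-1] x`. -/
noncomputable def itin (x : X) : ℕ → Sym :=
  fun k => H.symOf (H.f^[k - 1] x)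

/-- The kneading sequence: the itinerary of the critical value (1-indexed). -/
noncomputable def kneading : ℕ → Sym := H.itin H.c1

/-- `z` is the characteristic point of its periodic orbit: `c₁` lies in one
component of `X \ {z}` while `c₀` and all other points of the orbit lie in a
different component. -/
def IsCharacteristic (z : X) : Prop :=
  ∃ Cv Cz : Set X, Cv ∈ arms z ∧ Cz ∈ arms z ∧ Cv ≠ Cz ∧
    H.c1 ∈ Cv ∧ H.c0 ∈ Cz ∧ ∀ k : ℕ, H.f^[k] z ≠ z → H.f^[k] z ∈ Cz

/-- The first return map fixes the local arm at `z` pointing to the critical point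
and permutes all other local arms transitively in a single cycle. -/
def OtherArmsTransitive (n : ℕ) (z : X) : Prop :=
  ∀ C ∈ arms z, C ≠ armTo z H.c0 → ∀ C' ∈ arms z, C' ≠ armTo z H.c0 →
    ∃ j : ℕ, MapsLocalArm (H.f^[n * j]) z C C'

/-- `z` is the characteristic point of an evil periodic orbit of branch points of
exact period `n`. -/
def IsEvilOrbit (z : X) (n : ℕ) : Prop :=
  ExactPeriod H.f z n ∧ (∀ k : ℕ, IsBranchPt (H.f^[k] z)) ∧
    H.IsCharacteristic z ∧ ¬ ArmsTransitive H.f n z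

/-- `x` is precritical with `Step(x) = k`: `k ≥ 1` is minimal with `f^[k] x = c₁`. -/
def Step (x : X) (k : ℕ) : Prop :=
  1 ≤ k ∧ H.f^[k] x = H.c1 ∧ ∀ j, 1 ≤ j → j < k → H.f^[j] x ≠ H.c1

/-- `x` is the closest precritical point `ζ_k`. -/
def IsClosestPrecritical (x : X) (k : ℕ) : Prop :=
  H.Step x k ∧ ∀ j, 1 ≤ j → j < k → H.c1 ∉ H.f^[j] '' (H.arc H.c1 x)

/-- `x` is the earliest precritical point on the set `A`, with `Step(x) = k`:
it is a precritical point on `A` of minimal Step. -/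
def IsEarliestPrecriticalOn (A : Set X) (x : X) (k : ℕ) : Prop :=
  x ∈ A ∧ H.Step x k ∧ ∀ y ∈ A, ∀ j : ℕ, H.Step y j → k ≤ j

/-- Marked points: branch points and points of the critical orbit. -/
def MarkedPt (x : X) : Prop :=
  IsBranchPt x ∨ ∃ k : ℕ, H.f^[k] H.c0 = x

/-- Two marked points are joined by an edge if the arc between them contains no
further marked point. -/
def IsEdge (x y : X) : Prop :=
  H.MarkedPt x ∧ H.MarkedPt y ∧ x ≠ y ∧
    ∀ w ∈ H.arc x y, H.MarkedPt w → w = x ∨ w = y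

/-- Equivalence of Hubbard trees: a bijection between the marked points which
conjugates the dynamics and preserves edges. -/
def Equivalent {Y : Type*} [TopologicalSpace Y] (H' : HubbardTree Y) : Prop :=
  ∃ φ : X → Y,
    (∀ x : X, H.MarkedPt x → H'.MarkedPt (φ x)) ∧
    (∀ x x' : X, H.MarkedPt x → H.MarkedPt x' → φ x = φ x' → x = x') ∧
    (∀ y : Y, H'.MarkedPt y → ∃ x : X, H.MarkedPt x ∧ φ x = y) ∧
    φ H.c0 = H'.c0 ∧
    (∀ x : X, H.MarkedPt x → φ (H.f x) = H'.f (φ x)) ∧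
    (∀ x x' : X, H.MarkedPt x → H.MarkedPt x' →
      (H.IsEdge x x' ↔ H'.IsEdge (φ x) (φ x')))

end HubbardTree

/-! ### Combinatorics of kneading sequences -/

/-- The function `ρ_ν(n) = inf { k > n : ν_k ≠ ν_{k-n} } ∈ ℕ ∪ {∞}` (sequences are
1-indexed). -/
noncomputable def rho (ν : ℕ → Sym) (n : ℕ) : ℕ∞ :=
  sInf {e : ℕ∞ | ∃ j : ℕ, e = (j : ℕ∞) ∧ n < j ∧ ν j ≠ ν (j - n)}

/-- `RhoOrbit ν k m` means that `m` belongs to the `ρ`-orbit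
`k → ρ(k) → ρ(ρ(k)) → ⋯` of `k` (stopped before reaching `∞`). -/
inductive RhoOrbit (ν : ℕ → Sym) : ℕ → ℕ → Prop
  | refl (k : ℕ) : RhoOrbit ν k k
  | step {k m j : ℕ} : RhoOrbit ν k m → rho ν m = (j : ℕ∞) → RhoOrbit ν k j

/-- `m` occurs in the internal address `1 → ρ(1) → ρ(ρ(1)) → ⋯` of `ν`. -/
def InternalAddress (ν : ℕ → Sym) (m : ℕ) : Prop := RhoOrbit ν 1 m

/-- `ν` is a `*`-periodic kneading sequence of (exact) period `n`:
`ν = overline(1 ν₂ … ν_{n-1} *)`. -/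
def StarPeriodic (ν : ℕ → Sym) (n : ℕ) : Prop :=
  2 ≤ n ∧ ν 1 = Sym.one ∧ ν n = Sym.star ∧
    (∀ k, 1 ≤ k → ν (k + n) = ν k) ∧
    (∀ k, 1 ≤ k → k < n → ν k ≠ Sym.star)

/-- `ν` fails the admissibility condition for period `m`. -/
def FailsAdmissibility (ν : ℕ → Sym) (m : ℕ) : Prop :=
  1 ≤ m ∧
  ¬ InternalAddress ν m ∧
  (∀ k : ℕ, k ∣ m → 1 ≤ k → k < m → rho ν k ≤ (m : ℕ∞)) ∧
  ∃ R r : ℕ, rho ν m = (R : ℕ∞) ∧ 1 ≤ r ∧ r ≤ m ∧ r ≡ R [MOD m] ∧ RhoOrbit ν r m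

open Classical in
/-- The number `q(m)` of arms predicted by the kneading sequence, where
`ρ(m) = R < ∞` and `r ∈ {1,…,m}` is congruent to `R` modulo `m`. -/
noncomputable def qArms (ν : ℕ → Sym) (m R r : ℕ) : ℕ :=
  if RhoOrbit ν r m then (R - r) / m + 1 else (R - r) / m + 2


/-! ### Embeddings into the plane and cyclic order of arms -/

/-- Three points in the plane are in (strictly) counterclockwise position. -/
def Ccw (p q r : ℝ × ℝ) : Prop :=
  0 < (q.1 - p.1) * (r.2 - p.2) - (q.2 - p.2) * (r.1 - p.1)

namespace HubbardTree

variable {X : Type*} [TopologicalSpace X] (H : HubbardTree X)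

/-- Under an embedding `φ` of the tree into the plane, `p` is a first exit point of
the arm `C` at `x` through the circle of radius `ε` around `φ x`: `p = φ y` for a
point `y ∈ C` at distance exactly `ε`, such that the arc from `x` to `y` stays
within distance `< ε` before reaching `y`. -/
def ExitPt (φ : X → ℝ × ℝ) (x : X) (C : Set X) (ε : ℝ) (p : ℝ × ℝ) : Prop :=
  ∃ y ∈ C, φ y = p ∧ dist (φ x) p = ε ∧
    ∀ z ∈ H.arc x y, z ≠ y → dist (φ x) (φ z) < ε

/-- The local arms at `x` represented by the arms `C, C', C''` are in
counterclockwise cyclic order under the embedding `φ`. -/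
def ArmsCcw (φ : X → ℝ × ℝ) (x : X) (C C' C'' : Set X) : Prop :=
  ∃ ε₀ : ℝ, 0 < ε₀ ∧ ∀ ε : ℝ, 0 < ε → ε < ε₀ →
    ∀ p p' p'' : ℝ × ℝ, H.ExitPt φ x C ε p → H.ExitPt φ x C' ε p' →
      H.ExitPt φ x C'' ε p'' → Ccw p p' p''

/-- `f` respects the cyclic order (induced by the embedding `φ`) of the local arms
at all branch points. -/
def RespectsCyclicOrder (φ : X → ℝ × ℝ) : Prop :=
  ∀ x : X, IsBranchPt x →
    ∀ C C' C'' : Set X, C ∈ arms x → C' ∈ arms x → C'' ∈ arms x →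
      C ≠ C' → C' ≠ C'' → C ≠ C'' → H.ArmsCcw φ x C C' C'' →
      ∀ D D' D'' : Set X, MapsLocalArm H.f x C D → MapsLocalArm H.f x C' D' →
        MapsLocalArm H.f x C'' D'' → H.ArmsCcw φ (H.f x) D D' D''

/-- The Hubbard tree can be topologically embedded into the plane `ℝ²` so that `f`
respects the cyclic order of the local arms at all branch points. -/
def PlanarEmbeddable : Prop :=
  ∃ φ : X → ℝ × ℝ, Topology.IsEmbedding φ ∧ H.RespectsCyclicOrder φ

end HubbardTree


/-!
A finite tree is a dendrite: its arms are open and any two distinct points are separated by a third.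
A locally injective path that is not injective contains a simple loop. There are no such loops in a
dendrite, since a point separating two points of the loop would lie on both halves of it. Hence a
map that is locally injective away from `c` is injective on every closed connected set avoiding `c`.

Follow the germ of `G` along the orbit of `z`. Suppose that at `x = f^[j] z` it points towards `w`.
If the arm at `x` towards `w` avoids `c`, then `f` is injective on that arm together with `x`, and
the next germ points towards `f w`. Otherwise the germ points towards `c`, and the next one points
towards `f c`. Either the first alternative always occurs for the images of `G`, or from some moment
on the germ points towards `f c` or towards a point of the orbit of `z`: when it points to `f c`
at a point `f^[j] z ≠ z`, it also points towards `z`, because `z` separates `f^[j] z` from `f c`.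
Upon the return to `z` it thus points towards `f c`, or towards the rest of the orbit, hence
towards `c`.
-/

open Set Topology unitInterval

section Arms

variable {X : Type*} [TopologicalSpace X] {p s t x y : X} {C K S : Set X}

theorem mem_armTo_self (h : x ≠ p) : x ∈ armTo p x :=
  mem_connectedComponentIn h

theorem armTo_self (p : X) : armTo p p = ∅ :=
  connectedComponentIn_eq_empty fun h => h rfl

theorem notMem_armTo (p x : X) : p ∉ armTo p x := fun h =>
  connectedComponentIn_subset _ _ h rfl

theorem ne_of_mem_armTo (h : y ∈ armTo p x) : y ≠ p :=
  fun e => notMem_armTo p x (e ▸ h)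

theorem armTo_eq_of_mem (h : y ∈ armTo p x) : armTo p x = armTo p y :=
  connectedComponentIn_eq h

theorem isPreconnected_armTo : IsPreconnected (armTo p x) :=
  isPreconnected_connectedComponentIn

theorem subset_armTo (hS : IsPreconnected S) (hp : p ∉ S) (hx : x ∈ S) : S ⊆ armTo p x :=
  hS.subset_connectedComponentIn hx (subset_compl_singleton_iff.2 hp)

theorem armTo_mem_arms_iff : armTo p x ∈ arms p ↔ x ≠ p := by
  refine ⟨?_, fun h => ⟨x, h, rfl⟩⟩
  rintro ⟨y, hy, h : armTo p x = armTo p y⟩ rfl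
  exact notMem_empty y (armTo_self x ▸ h ▸ mem_armTo_self hy)

theorem eq_armTo_of_mem_arms (hC : C ∈ arms p) (hx : x ∈ C) : C = armTo p x := by
  obtain ⟨y, -, rfl⟩ := hC
  exact armTo_eq_of_mem hx

theorem armTo_subset_armTo (h : s ∉ armTo t p) : armTo t p ⊆ armTo s p := by
  rcases eq_or_ne t p with rfl | ht
  · simp [armTo_self]
  · exact subset_armTo isPreconnected_armTo h (mem_armTo_self ht.symm)

theorem closure_armTo_subset : closure (armTo p x) ⊆ insert p (armTo p x) := by
  rcases eq_or_ne x p with rfl | hx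
  · simp [armTo_self]
  have hpre : IsPreconnected (closure (armTo p x) \ {p}) :=
    isPreconnected_armTo.subset_closure
      (subset_sdiff_singleton subset_closure (notMem_armTo p x)) sdiff_subset
  rw [← sdiff_singleton_subset_iff]
  exact subset_armTo hpre (by simp) ⟨subset_closure (mem_armTo_self hx), hx⟩

theorem isClosed_insert_armTo [T1Space X] (p x : X) : IsClosed (insert p (armTo p x)) := by
  rw [← closure_subset_iff_isClosed, insert_eq, closure_union, closure_singleton]
  exact union_subset subset_union_left closure_armTo_subset

theorem isOpen_armTo_of_finite [T1Space X] (hfin : (arms p).Finite) (x : X) :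
    IsOpen (armTo p x) := by
  have hclosed : IsClosed ({p} ∪ ⋃ C ∈ arms p \ {armTo p x}, insert p C) := by
    refine isClosed_singleton.union ((hfin.subset sdiff_subset).isClosed_biUnion ?_)
    rintro _ ⟨⟨y, -, rfl⟩, -⟩
    exact isClosed_insert_armTo p y
  convert hclosed.isOpen_compl using 1
  ext y
  simp only [compl_union, mem_inter_iff, mem_compl_iff, mem_singleton_iff, mem_iUnion, not_exists]
  constructor
  · refine fun hy => ⟨ne_of_mem_armTo hy, ?_⟩
    rintro C ⟨hC, hne⟩ (rfl | hyC)
    · exact notMem_armTo y x hy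
    · exact hne ((eq_armTo_of_mem_arms hC hyC).trans (armTo_eq_of_mem hy).symm)
  · rintro ⟨hyp, hy⟩
    by_contra hyx
    refine hy (armTo p y) ⟨armTo_mem_arms_iff.2 hyp, fun h : armTo p y = armTo p x => ?_⟩
      (.inr (mem_armTo_self hyp))
    exact hyx (h ▸ mem_armTo_self hyp)

theorem isPreconnected_insert_armTo [PreconnectedSpace X] (hopen : IsOpen (armTo p x)) :
    IsPreconnected (insert p (armTo p x)) := by
  rcases eq_or_ne x p with rfl | hx
  · simpa [armTo_self] using isPreconnected_singleton
  refine isPreconnected_armTo.subset_closure (subset_insert _ _)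
    (insert_subset ?_ subset_closure)
  by_contra hp
  have hclosed : IsClosed (armTo p x) := closure_subset_iff_isClosed.1 fun y hy =>
    (closure_armTo_subset hy).resolve_left fun e => hp (e ▸ hy)
  exact notMem_armTo p x
    (IsClopen.eq_univ ⟨hclosed, hopen⟩ ⟨x, mem_armTo_self hx⟩ ▸ mem_univ p)

open Classical in
theorem continuous_collapse_armTo (hopen : IsOpen (armTo p x)) :
    Continuous fun y => if y ∈ armTo p x then p else y := by
  refine continuous_const.if (fun y hy => ?_) continuous_id
  rw [ofPred_mem_eq, hopen.frontier_eq] at hy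
  exact ((closure_armTo_subset hy.1).resolve_right hy.2).symm

theorem isPreconnected_diff_armTo (hopen : IsOpen (armTo p x)) (hK : IsPreconnected K) :
    IsPreconnected (K \ armTo p x) := by
  classical
  by_cases hp : p ∈ K
  · convert hK.image _ (continuous_collapse_armTo hopen).continuousOn using 1
    ext y
    constructor
    · exact fun ⟨hyK, hy⟩ => ⟨y, hyK, if_neg hy⟩
    · rintro ⟨w, hw, rfl⟩
      dsimp only
      split_ifs with h
      exacts [⟨hp, notMem_armTo p x⟩, ⟨hw, h⟩]
  · rcases (K ∩ armTo p x).eq_empty_or_nonempty with h | ⟨y, hyK, hy⟩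
    · rwa [sdiff_eq_left.2 (disjoint_iff_inter_eq_empty.2 h)]
    · rw [sdiff_eq_empty.2 (armTo_eq_of_mem hy ▸ subset_armTo hK hp hyK)]
      exact isPreconnected_empty

theorem isEndpoint_of_forall_mem_armTo (hxp : p ≠ x) (h : ∀ y ≠ x, y ∈ armTo x p) :
    IsEndpoint x := by
  refine ncard_eq_one.2 ⟨armTo x p, eq_singleton_iff_unique_mem.2 ⟨armTo_mem_arms_iff.2 hxp, ?_⟩⟩
  rintro _ ⟨y, hy, rfl⟩
  exact (armTo_eq_of_mem (h y hy)).symm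

/-- The point `t` separates `x` from `y`: removing `t` leaves them in different components. -/
structure Separates (t x y : X) : Prop where
  ne_left : t ≠ x
  ne_right : t ≠ y
  notMem_armTo : y ∉ armTo t x

theorem Separates.mem_of_isPreconnected (h : Separates t x y) (hS : IsPreconnected S)
    (hx : x ∈ S) (hy : y ∈ S) : t ∈ S := by
  by_contra ht
  exact h.notMem_armTo (subset_armTo hS ht hx hy)

theorem MapsLocalArm.comp {f g : X → X} {D E : Set X} (hf : MapsLocalArm f (g x) D E)
    (hg : MapsLocalArm g x C D) (hcont : ContinuousAt g x) : MapsLocalArm (f ∘ g) x C E := by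
  obtain ⟨-, hE, V, hV, hVE⟩ := hf
  obtain ⟨hC, -, U, hU, hUD⟩ := hg
  refine ⟨hC, hE, U ∩ g ⁻¹' V, Filter.inter_mem hU (hcont hV), ?_⟩
  rintro _ ⟨y, ⟨hyC, hyU, hyV⟩, rfl⟩
  exact hVE ⟨g y, ⟨hUD ⟨y, ⟨hyC, hyU⟩, rfl⟩, hyV⟩, rfl⟩

end Arms

section Endpoints

variable {X : Type*} [TopologicalSpace X] [PreconnectedSpace X] {p t : X}

theorem mem_armTo_of_notMem_armTo (hopen : IsOpen (armTo t p)) (htp : t ≠ p) {s : X}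
    (hst : s ≠ t) (hs : s ∉ armTo t p) : t ∈ armTo s p :=
  subset_armTo (isPreconnected_insert_armTo hopen) (by simp [hst, hs])
    (.inr (mem_armTo_self htp.symm)) (mem_insert _ _)

theorem exists_isEndpoint_notMem_armTo [CompactSpace X] (hopen : ∀ s : X, IsOpen (armTo s p))
    (htp : t ≠ p) : ∃ e, IsEndpoint e ∧ e ∉ armTo t p := by
  let beyond : Set (Set X) := range fun s => (armTo s p)ᶜ
  obtain ⟨_, hle, hmin⟩ : ∃ E, E ⊆ (armTo t p)ᶜ ∧ Minimal (· ∈ beyond) E := by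
    refine zorn_superset_nonempty beyond (fun c hc hchain hne => ?_) _ ⟨t, rfl⟩
    have : Nonempty c := hne.to_subtype
    obtain ⟨s, hs⟩ : (⋂₀ c).Nonempty := by
      refine IsCompact.nonempty_sInter_of_directed_nonempty_isCompact_isClosed
        (fun E hE F hF => (hchain.total hE hF).elim (fun h => ⟨E, hE, Subset.rfl, h⟩)
          fun h => ⟨F, hF, h, Subset.rfl⟩) ?_ ?_ ?_ <;>
      intro E hE <;> obtain ⟨s, rfl⟩ := hc hE
      exacts [⟨s, notMem_armTo s p⟩, (hopen s).isClosed_compl.isCompact, (hopen s).isClosed_compl]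
    refine ⟨(armTo s p)ᶜ, ⟨s, rfl⟩, fun E hE => ?_⟩
    obtain ⟨u, rfl⟩ := hc hE
    exact compl_subset_compl.2 (armTo_subset_armTo (hs _ hE))
  obtain ⟨e, rfl⟩ := hmin.prop
  have het : e ∉ armTo t p := hle (notMem_armTo e p)
  have hep : e ≠ p := by
    rintro rfl
    exact het (mem_armTo_self htp.symm)
  refine ⟨e, isEndpoint_of_forall_mem_armTo hep.symm fun y hye => ?_, het⟩
  by_contra hy
  have hey : e ∉ armTo y p := hmin.le_of_le ⟨y, rfl⟩
    (compl_subset_compl.2 (armTo_subset_armTo hy)) (notMem_armTo e p)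
  exact hey (mem_armTo_of_notMem_armTo (hopen e) hep hye hy)

/-- The sets `(armTo t p)ᶜ` with `t ∈ A` are disjoint, and each contains an endpoint. -/
theorem infinite_isEndpoint [CompactSpace X] (hopen : ∀ s : X, IsOpen (armTo s p)) {A : Set X}
    (hA : A.Infinite) (hp : p ∉ A) (hmem : ∀ s ∈ A, ∀ t ∈ A, t ≠ s → t ∈ armTo s p) :
    {e : X | IsEndpoint e}.Infinite := by
  have hex (t) (ht : t ∈ A) := exists_isEndpoint_notMem_armTo hopen fun h : t = p => hp (h ▸ ht)
  choose! e he heA using hex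
  refine infinite_of_injOn_mapsTo (f := e) ?_ he hA
  intro s hs t ht hst
  by_contra hne
  have hcompl : (armTo s p)ᶜ ⊆ armTo t s := by
    refine subset_armTo ?_ (not_not.2 (hmem s hs t ht (Ne.symm hne))) (notMem_armTo s p)
    exact compl_eq_univ_sdiff (armTo s p) ▸ isPreconnected_diff_armTo (hopen s) isPreconnected_univ
  refine heA t ht ?_
  rw [armTo_eq_of_mem (hmem t ht s hs hne), ← hst]
  exact hcompl (heA s hs)

end Endpoints

section Dendrites

variable {X : Type*} [TopologicalSpace X]

/-- A (generalized) dendrite, when `X` is compact: any two distinct points are joined by an arc and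
separated by a third point. Arms are required to be open so that separation by a point can be
expressed through connected components. -/
structure IsDendrite (X : Type*) [TopologicalSpace X] : Prop where
  isOpen_armTo : ∀ p x : X, IsOpen (armTo p x)
  exists_separates : ∀ x y : X, x ≠ y → ∃ t, Separates t x y
  exists_injective_path : ∀ x y : X, x ≠ y → ∃ γ : Path x y, Function.Injective γ

theorem map_mem_armTo {β : I → X} (hβ : Continuous β) {p : X} {a b : I}
    (h : ∀ r ∈ uIcc a b, β r ≠ p) : β a ∈ armTo p (β b) := by
  refine subset_armTo (isPreconnected_uIcc.image β hβ.continuousOn) ?_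
    (mem_image_of_mem β right_mem_uIcc) (mem_image_of_mem β left_mem_uIcc)
  rintro ⟨r, hr, hrp⟩
  exact h r hr hrp

theorem exists_separates_of_finite_isEndpoint [PreconnectedSpace X] [CompactSpace X]
    (hopen : ∀ p x : X, IsOpen (armTo p x)) (hend : {e : X | IsEndpoint e}.Finite) {x y : X}
    {γ : Path x y} (hγ : Function.Injective γ) : ∃ t, Separates t x y := by
  by_contra! hns
  refine infinite_isEndpoint (p := x) (A := γ '' Ioo 0 1) (hopen · x)
    ((Ioo_infinite zero_lt_one).image hγ.injOn) ?_ ?_ hend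
  · rintro ⟨u, hu, hux⟩
    exact hu.1.ne' (hγ (hux.trans γ.source.symm))
  rintro _ ⟨u, hu, rfl⟩ _ ⟨v, -, rfl⟩ hvu
  rcases (hγ.ne_iff.1 hvu).lt_or_gt with hlt | hlt
  · have hmem : γ v ∈ armTo (γ u) (γ 0) := map_mem_armTo γ.continuous fun r hr => by
      rw [uIcc_of_ge (unitInterval.nonneg' : 0 ≤ v)] at hr
      exact hγ.ne (hr.2.trans_lt hlt).ne
    rwa [γ.source] at hmem
  · have hmem : γ v ∈ armTo (γ u) (γ 1) := map_mem_armTo γ.continuous fun r hr => by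
      rw [uIcc_of_le (unitInterval.le_one' : v ≤ 1)] at hr
      exact hγ.ne (hlt.trans_le hr.1).ne'
    have hy : y ∈ armTo (γ u) x := by
      by_contra hy
      refine hns (γ u) ⟨fun h => hu.1.ne' ?_, fun h => hu.2.ne ?_, hy⟩
      exacts [hγ (h.trans γ.source.symm), hγ (h.trans γ.target.symm)]
    rwa [γ.target, ← armTo_eq_of_mem hy] at hmem

namespace IsDendrite

theorem t2Space (hX : IsDendrite X) : T2Space X := by
  refine ⟨fun x y hxy => ?_⟩
  obtain ⟨t, ht⟩ := hX.exists_separates x y hxy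
  refine ⟨armTo t x, armTo t y, hX.isOpen_armTo t x, hX.isOpen_armTo t y,
    mem_armTo_self ht.ne_left.symm, mem_armTo_self ht.ne_right.symm, ?_⟩
  refine disjoint_left.2 fun w hwx hwy => ht.notMem_armTo ?_
  rw [armTo_eq_of_mem hwx, ← armTo_eq_of_mem hwy]
  exact mem_armTo_self ht.ne_right.symm

theorem preconnectedSpace (hX : IsDendrite X) : PreconnectedSpace X := by
  refine ⟨isPreconnected_of_forall_pair fun x _ y _ => ?_⟩
  rcases eq_or_ne x y with rfl | hxy
  · exact ⟨{x}, subset_univ _, rfl, rfl, isPreconnected_singleton⟩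
  · obtain ⟨γ, -⟩ := hX.exists_injective_path x y hxy
    exact ⟨range γ, subset_univ _, ⟨0, γ.source⟩, ⟨1, γ.target⟩, isPreconnected_range γ.continuous⟩

theorem isPreconnected_insert_armTo (hX : IsDendrite X) (p x : X) :
    IsPreconnected (insert p (armTo p x)) :=
  have := hX.preconnectedSpace
  HubbardTrees.isPreconnected_insert_armTo (hX.isOpen_armTo p x)

theorem isClosed_insert_armTo (hX : IsDendrite X) (p x : X) : IsClosed (insert p (armTo p x)) :=
  have := hX.t2Space
  HubbardTrees.isClosed_insert_armTo p x

/-- Cut off finitely many arms covering the complement of `U`. -/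
theorem exists_nhds_isPreconnected_inter [CompactSpace X] (hX : IsDendrite X) {p : X} {U : Set X}
    (hU : U ∈ 𝓝 p) :
    ∃ V ∈ 𝓝 p, V ⊆ U ∧ ∀ K : Set X, IsPreconnected K → IsPreconnected (K ∩ V) := by
  suffices ∃ V ∈ 𝓝 p, Disjoint V (interior U)ᶜ ∧
      ∀ K : Set X, IsPreconnected K → IsPreconnected (K ∩ V) by
    obtain ⟨V, hV, hdisj, hpre⟩ := this
    exact ⟨V, hV, (disjoint_compl_right_iff_subset.1 hdisj).trans interior_subset, hpre⟩
  refine isOpen_interior.isClosed_compl.isCompact.induction_on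
    (p := fun S => ∃ V ∈ 𝓝 p, Disjoint V S ∧
      ∀ K : Set X, IsPreconnected K → IsPreconnected (K ∩ V)) ?_ ?_ ?_ fun s hs => ?_
  · exact ⟨univ, Filter.univ_mem, disjoint_empty _, fun K hK => by rwa [inter_univ]⟩
  · rintro S S' hSS' ⟨V, hV, hdisj, hpre⟩
    exact ⟨V, hV, hdisj.mono_right hSS', hpre⟩
  · rintro S S' ⟨V, hV, hdisj, hpre⟩ ⟨V', hV', hdisj', hpre'⟩
    refine ⟨V ∩ V', Filter.inter_mem hV hV', ?_, fun K hK => ?_⟩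
    · exact disjoint_union_right.2
        ⟨hdisj.mono_left inter_subset_left, hdisj'.mono_left inter_subset_right⟩
    · exact inter_assoc K V V' ▸ hpre' _ (hpre K hK)
  · have hsp : s ≠ p := fun h => hs (h ▸ mem_interior_iff_mem_nhds.2 hU)
    obtain ⟨t, ht⟩ := hX.exists_separates s p hsp
    have hclosure : p ∉ closure (armTo t s) := fun h =>
      (closure_armTo_subset h).elim ht.ne_right.symm ht.notMem_armTo
    refine ⟨armTo t s, mem_nhdsWithin_of_mem_nhds
      ((hX.isOpen_armTo t s).mem_nhds (mem_armTo_self ht.ne_left.symm)), (armTo t s)ᶜ, ?_,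
      disjoint_compl_left, fun K hK => isPreconnected_diff_armTo (hX.isOpen_armTo t s) hK⟩
    rwa [← mem_interior_iff_mem_nhds, interior_compl]

theorem apply_mem_of_isClosed_of_isPreconnected (hX : IsDendrite X) {x y : X} {γ : Path x y}
    (hγ : Function.Injective γ) {S : Set X} (hclosed : IsClosed S) (hS : IsPreconnected S)
    (hx : x ∈ S) (hy : y ∈ S) (v : I) : γ v ∈ S := by
  by_contra hv
  have hpre : IsClosed (γ ⁻¹' S) := hclosed.preimage γ.continuous
  obtain ⟨a, ⟨haS, hav⟩, hamax⟩ := (hpre.inter (isClosed_Iic (a := v))).isCompact.exists_isGreatest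
    ⟨0, by rwa [mem_preimage, γ.source], v.2.1⟩
  obtain ⟨b, ⟨hbS, hvb⟩, hbmin⟩ := (hpre.inter (isClosed_Ici (a := v))).isCompact.exists_isLeast
    ⟨1, by rwa [mem_preimage, γ.target], v.2.2⟩
  have hav' : a < v := lt_of_le_of_ne hav fun h => hv (h ▸ haS)
  have hvb' : v < b := lt_of_le_of_ne hvb fun h => hv (h ▸ hbS)
  obtain ⟨t, ht⟩ := hX.exists_separates (γ a) (γ b) (hγ.ne (hav'.trans hvb').ne)
  obtain ⟨r, hr, rfl⟩ := ht.mem_of_isPreconnected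
    (isPreconnected_Icc.image γ γ.continuous.continuousOn)
    (mem_image_of_mem γ (left_mem_Icc.2 (hav.trans hvb)))
    (mem_image_of_mem γ (right_mem_Icc.2 (hav.trans hvb)))
  have hrS : γ r ∈ S := ht.mem_of_isPreconnected hS haS hbS
  rcases le_total r v with hrv | hvr
  · exact ht.ne_left (congrArg γ ((hamax ⟨hrS, hrv⟩).antisymm hr.1))
  · exact ht.ne_right (congrArg γ (hr.2.antisymm (hbmin ⟨hrS, hvr⟩)))

theorem not_injOn_Ico_of_loop (hX : IsDendrite X) {β : I → X} (hβ : Continuous β) {s t : I}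
    (hst : s < t) (hloop : β s = β t) : ¬ InjOn β (Ico s t) := by
  intro hinj
  obtain ⟨r, hsr, hrt⟩ := exists_between hst
  have hne : β s ≠ β r := fun h =>
    hsr.ne (hinj (left_mem_Ico.2 hst) ⟨hsr.le, hrt⟩ h)
  obtain ⟨q, hq⟩ := hX.exists_separates _ _ hne
  have hhalf (a b : I) : IsPreconnected (β '' Icc a b) :=
    isPreconnected_Icc.image β hβ.continuousOn
  obtain ⟨u, hu, huq⟩ := hq.mem_of_isPreconnected (hhalf s r)
    (mem_image_of_mem β (left_mem_Icc.2 hsr.le)) (mem_image_of_mem β (right_mem_Icc.2 hsr.le))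
  obtain ⟨w, hw, hwq⟩ := hq.mem_of_isPreconnected (hhalf r t)
    (hloop ▸ mem_image_of_mem β (right_mem_Icc.2 hrt.le))
    (mem_image_of_mem β (left_mem_Icc.2 hrt.le))
  have hur : u < r := lt_of_le_of_ne hu.2 fun h => hq.ne_right (h ▸ huq.symm)
  have hwt : w < t := lt_of_le_of_ne hw.2 fun h => hq.ne_left (hloop ▸ h ▸ hwq.symm)
  exact (hur.trans_le hw.1).ne
    (hinj ⟨hu.1, hur.trans hrt⟩ ⟨hsr.le.trans hw.1, hwt⟩ (huq.trans hwq.symm))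

end IsDendrite

end Dendrites

section LocallyInjective

variable {Y : Type*} [TopologicalSpace Y] {β : I → Y}

theorem isClosed_setOf_lt_and_eq [T2Space Y] (hβ : Continuous β)
    (hloc : ∀ s, ∃ V ∈ 𝓝 s, InjOn β V) :
    IsClosed {q : I × I | q.1 < q.2 ∧ β q.1 = β q.2} := by
  refine closure_subset_iff_isClosed.1 fun q hq => ?_
  have hclosed : IsClosed {q : I × I | q.1 ≤ q.2 ∧ β q.1 = β q.2} :=
    (isClosed_le continuous_fst continuous_snd).inter
      (isClosed_eq (hβ.comp continuous_fst) (hβ.comp continuous_snd))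
  have hle : q.1 ≤ q.2 ∧ β q.1 = β q.2 :=
    hclosed.closure_subset_iff.2 (fun _ h => ⟨h.1.le, h.2⟩) hq
  refine ⟨lt_of_le_of_ne hle.1 fun hdiag => ?_, hle.2⟩
  obtain ⟨V, hV, hinj⟩ := hloc q.1
  obtain ⟨⟨u, w⟩, ⟨hu, hw⟩, hlt, heq⟩ :=
    mem_closure_iff_nhds.1 hq (V ×ˢ V) (prod_mem_nhds hV (hdiag ▸ hV))
  exact hlt.ne (hinj hu hw heq)

theorem exists_simple_loop [T2Space Y] (hβ : Continuous β) (hloc : ∀ s, ∃ V ∈ 𝓝 s, InjOn β V)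
    (hninj : ¬ Function.Injective β) : ∃ s t, s < t ∧ β s = β t ∧ InjOn β (Ico s t) := by
  have hne : {q : I × I | q.1 < q.2 ∧ β q.1 = β q.2}.Nonempty := by
    obtain ⟨u, w, heq, huw⟩ := Function.not_injective_iff.1 hninj
    rcases huw.lt_or_gt with h | h
    exacts [⟨(u, w), h, heq⟩, ⟨(w, u), h, heq.symm⟩]
  obtain ⟨⟨s, t⟩, ⟨hst, heq⟩, hmin⟩ := (isClosed_setOf_lt_and_eq hβ hloc).isCompact.exists_isMinOn
    hne (f := fun q : I × I => (q.2 : ℝ) - q.1) (by fun_prop)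
  refine ⟨s, t, hst, heq, fun u hu w hw huw => ?_⟩
  wlog hlt : u < w generalizing u w
  · by_contra hne
    exact hne (this w hw u hu huw.symm (lt_of_le_of_ne (not_lt.1 hlt) (Ne.symm hne))).symm
  have hshort : (t : ℝ) - s ≤ w - u := isMinOn_iff.1 hmin (u, w) ⟨hlt, huw⟩
  have hsu : (s : ℝ) ≤ u := hu.1
  have hwt : (w : ℝ) < t := hw.2
  linarith

theorem IsDendrite.injective_of_locally_injOn (hY : IsDendrite Y) (hβ : Continuous β)
    (hloc : ∀ s, ∃ V ∈ 𝓝 s, InjOn β V) : Function.Injective β := by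
  have := hY.t2Space
  by_contra hninj
  obtain ⟨s, t, hst, hloop, hinj⟩ := exists_simple_loop hβ hloc hninj
  exact hY.not_injOn_Ico_of_loop hβ hst hloop hinj

theorem IsDendrite.injOn_of_locally_injOn {X : Type*} [TopologicalSpace X] (hX : IsDendrite X)
    (hY : IsDendrite Y) {f : X → Y} (hf : Continuous f) {S : Set X} (hclosed : IsClosed S)
    (hS : IsPreconnected S) (hloc : ∀ x ∈ S, ∃ U ∈ 𝓝 x, InjOn f U) : InjOn f S := by
  intro x hx y hy hxy
  by_contra hne
  obtain ⟨γ, hγ⟩ := hX.exists_injective_path x y hne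
  have hinj : Function.Injective (f ∘ γ) := by
    refine hY.injective_of_locally_injOn (hf.comp γ.continuous) fun s => ?_
    obtain ⟨U, hU, hUf⟩ :=
      hloc (γ s) (hX.apply_mem_of_isClosed_of_isPreconnected hγ hclosed hS hx hy s)
    exact ⟨γ ⁻¹' U, γ.continuous.continuousAt hU, hUf.comp hγ.injOn (mapsTo_preimage γ U)⟩
  exact zero_ne_one (hinj (a₁ := 0) (a₂ := 1) (by simpa using hxy))

theorem IsDendrite.injOn_insert_armTo {X : Type*} [TopologicalSpace X] (hX : IsDendrite X)
    (hY : IsDendrite Y) {f : X → Y} (hf : Continuous f) {c x w : X}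
    (hloc : ∀ y ≠ c, ∃ U ∈ 𝓝 y, InjOn f U) (hx : x ≠ c) (hc : c ∉ armTo x w) :
    InjOn f (insert x (armTo x w)) := by
  refine hX.injOn_of_locally_injOn hY hf (hX.isClosed_insert_armTo x w)
    (hX.isPreconnected_insert_armTo x w) fun y hy => hloc y ?_
  rintro rfl
  exact hy.elim hx.symm hc

end LocallyInjective

section LocalArms

variable {X : Type*} [TopologicalSpace X] [CompactSpace X] {f : X → X} {c x w : X}

theorem mapsHomeoOn_of_injOn_isClosed [T2Space X] (hf : Continuous f) {A K : Set X}
    (hK : IsClosed K) (hinj : InjOn f K) (hA : A ⊆ K) : MapsHomeoOn f A := by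
  have := isCompact_iff_compactSpace.1 hK.isCompact
  have hemb := (hf.comp continuous_subtype_val).isClosedEmbedding (injOn_iff_injective.1 hinj)
  exact hemb.isEmbedding.comp (IsEmbedding.inclusion hA)

namespace IsDendrite

theorem mapsLocalArm_of_injective_path (hX : IsDendrite X) (hf : Continuous f) {γ : Path x w}
    (hγ : Function.Injective γ) {U : Set X} (hU : U ∈ 𝓝 x) (hinj : InjOn f U)
    (hne : ∀ t ≠ 0, f (γ t) ≠ f x) : MapsLocalArm f x (armTo x w) (armTo (f x) (f w)) := by
  have hγx (t : I) (ht : t ≠ 0) : γ t ≠ x := fun h => ht (hγ (h.trans γ.source.symm))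
  obtain ⟨V, hV, hVU, hpre⟩ := hX.exists_nhds_isPreconnected_inter hU
  obtain ⟨t, htV, ht⟩ : ∃ t, γ t ∈ V ∧ t ≠ 0 := by
    have hnear : ∀ᶠ t in 𝓝[≠] 0, γ t ∈ V :=
      nhdsWithin_le_nhds (γ.continuous.continuousAt (γ.source.symm ▸ hV))
    exact (hnear.and self_mem_nhdsWithin).exists
  have hpos (r : I) (hr : r ∈ uIcc t 1) : r ≠ 0 := by
    rw [uIcc_of_le unitInterval.le_one'] at hr
    exact ((unitInterval.pos_iff_ne_zero.2 ht).trans_le hr.1).ne'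
  have htw : γ t ∈ armTo x (γ 1) :=
    map_mem_armTo γ.continuous fun r hr => hγx r (hpos r hr)
  have hftw : f (γ t) ∈ armTo (f x) (f (γ 1)) :=
    map_mem_armTo (hf.comp γ.continuous) fun r hr => hne r (hpos r hr)
  rw [γ.target] at htw hftw
  refine ⟨armTo_mem_arms_iff.2 (γ.target ▸ hγx 1 one_ne_zero),
    armTo_mem_arms_iff.2 (γ.target ▸ hne 1 one_ne_zero), V, hV, ?_⟩
  rw [armTo_eq_of_mem hftw]
  refine subset_armTo ((hpre _ isPreconnected_armTo).image f hf.continuousOn) ?_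
    (mem_image_of_mem f ⟨htw, htV⟩)
  rintro ⟨y, ⟨hy, hyV⟩, hyx⟩
  exact ne_of_mem_armTo hy (hinj (hVU hyV) (mem_of_mem_nhds hU) hyx)

theorem mapsLocalArm_armTo_critical (hX : IsDendrite X) (hf : Continuous f)
    (hloc : ∀ y ≠ c, ∃ U ∈ 𝓝 y, InjOn f U) (hx : f c ≠ f x) :
    MapsLocalArm f x (armTo x c) (armTo (f x) (f c)) := by
  have := hX.t2Space
  have hxc : x ≠ c := ne_of_apply_ne f hx.symm
  obtain ⟨γ, hγ⟩ := hX.exists_injective_path x c hxc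
  obtain ⟨U, hU, hUf⟩ := hloc x hxc
  refine hX.mapsLocalArm_of_injective_path hf hγ hU hUf fun t ht htx => ?_
  have ht1 : t ≠ 1 := by
    rintro rfl
    exact hx (γ.target ▸ htx)
  have hinj : InjOn f (γ '' Icc 0 t) := by
    refine hX.injOn_of_locally_injOn hX hf (isCompact_Icc.image γ.continuous).isClosed
      (isPreconnected_Icc.image γ γ.continuous.continuousOn) ?_
    rintro _ ⟨r, hr, rfl⟩
    refine hloc _ fun hrc => ht1 (unitInterval.le_one'.antisymm ?_)
    exact hγ (hrc.trans γ.target.symm) ▸ hr.2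
  have h0t : (0 : I) ≤ t := unitInterval.nonneg'
  have hγt : γ t = γ 0 := hinj (mem_image_of_mem γ (right_mem_Icc.2 h0t))
    (mem_image_of_mem γ (left_mem_Icc.2 h0t)) (htx.trans (congrArg f γ.source.symm))
  exact ht (hγ hγt)

theorem mapsLocalArm_armTo (hX : IsDendrite X) (hf : Continuous f)
    (hloc : ∀ y ≠ c, ∃ U ∈ 𝓝 y, InjOn f U) (hx : x ≠ c) (hw : w ≠ x) (hc : c ∉ armTo x w) :
    MapsLocalArm f x (armTo x w) (armTo (f x) (f w)) := by
  obtain ⟨γ, hγ⟩ := hX.exists_injective_path x w hw.symm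
  obtain ⟨U, hU, hUf⟩ := hloc x hx
  have hmem := hX.apply_mem_of_isClosed_of_isPreconnected hγ (hX.isClosed_insert_armTo x w)
    (hX.isPreconnected_insert_armTo x w) (mem_insert _ _) (.inr (mem_armTo_self hw))
  refine hX.mapsLocalArm_of_injective_path hf hγ hU hUf fun t ht htx => ht (hγ ?_)
  rw [γ.source]
  exact hX.injOn_insert_armTo hX hf hloc hx hc (hmem t) (mem_insert _ _) htx

end IsDendrite

end LocalArms

section CharacteristicPoints

variable {X : Type*} [TopologicalSpace X] {f : X → X} {c z : X} {G : Set X} {j k m : ℕ}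

/-- The point `z` is characteristic for a map `f` with critical point `c`: the critical value `f c`
lies in another arm at `z` than `c`, while the points of the orbit of `z` other than `z` lie in the
same arm as `c`. -/
structure IsCharacteristicPt (f : X → X) (c z : X) : Prop where
  value_ne : f c ≠ z
  value_notMem : f c ∉ armTo z c
  orbit_mem : ∀ k, f^[k] z ≠ z → f^[k] z ∈ armTo z c

/-- The germ of `f^[j]` sends the local arm `G` at `z` to the local arm at `f^[j] z` pointing
towards the critical value `f c` or towards a point of the orbit of `z`. -/
def PointsTowardOrbit (f : X → X) (c z : X) (G : Set X) (j : ℕ) : Prop :=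
  ∃ w, (w = f c ∨ ∃ i, f^[i] z = w) ∧ MapsLocalArm f^[j] z G (armTo (f^[j] z) w)

namespace IsCharacteristicPt

theorem value_ne_orbit (hz : IsCharacteristicPt f c z) (k : ℕ) : f c ≠ f^[k] z := by
  intro h
  by_cases hk : f^[k] z = z
  · exact hz.value_ne (h.trans hk)
  · exact hz.value_notMem (h ▸ hz.orbit_mem k hk)

theorem orbit_ne_critical (hz : IsCharacteristicPt f c z) (k : ℕ) : f^[k] z ≠ c := fun h =>
  hz.value_ne_orbit (k + 1) (by rw [Function.iterate_succ_apply', h])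

theorem orbit_notMem_armTo_value (hz : IsCharacteristicPt f c z) (k : ℕ) :
    f^[k] z ∉ armTo z (f c) := by
  intro h
  refine hz.value_notMem ?_
  rw [armTo_eq_of_mem (hz.orbit_mem k (ne_of_mem_armTo h)), ← armTo_eq_of_mem h]
  exact mem_armTo_self hz.value_ne

theorem mem_armTo_value (hz : IsCharacteristicPt f c z) (hX : IsDendrite X)
    (hk : f^[k] z ≠ z) : z ∈ armTo (f^[k] z) (f c) :=
  have := hX.preconnectedSpace
  mem_armTo_of_notMem_armTo (hX.isOpen_armTo z (f c)) hz.value_ne.symm hk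
    (hz.orbit_notMem_armTo_value k)

variable [CompactSpace X]

theorem pointsTowardOrbit_succ_of_critical (hz : IsCharacteristicPt f c z) (hX : IsDendrite X)
    (hf : Continuous f) (hloc : ∀ y ≠ c, ∃ U ∈ 𝓝 y, InjOn f U)
    (h : MapsLocalArm f^[j] z G (armTo (f^[j] z) c)) : PointsTowardOrbit f c z G (j + 1) := by
  refine ⟨f c, .inl rfl, ?_⟩
  have hval := hz.value_ne_orbit (j + 1)
  rw [Function.iterate_succ_apply'] at hval ⊢
  rw [Function.iterate_succ']
  exact (hX.mapsLocalArm_armTo_critical hf hloc hval).comp h (hf.iterate j).continuousAt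

theorem pointsTowardOrbit_succ (hz : IsCharacteristicPt f c z) (hX : IsDendrite X)
    (hf : Continuous f) (hloc : ∀ y ≠ c, ∃ U ∈ 𝓝 y, InjOn f U) (hj : f^[j] z ≠ z)
    (h : PointsTowardOrbit f c z G j) : PointsTowardOrbit f c z G (j + 1) := by
  obtain ⟨i, hi⟩ : ∃ i, MapsLocalArm f^[j] z G (armTo (f^[j] z) (f^[i] z)) := by
    obtain ⟨w, rfl | ⟨i, rfl⟩, hw⟩ := h
    · exact ⟨0, armTo_eq_of_mem (hz.mem_armTo_value hX hj) ▸ hw⟩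
    · exact ⟨i, hw⟩
  by_cases hc : c ∈ armTo (f^[j] z) (f^[i] z)
  · rw [armTo_eq_of_mem hc] at hi
    exact hz.pointsTowardOrbit_succ_of_critical hX hf hloc hi
  · refine ⟨f^[i + 1] z, .inr ⟨i + 1, rfl⟩, ?_⟩
    rw [Function.iterate_succ_apply', Function.iterate_succ_apply', Function.iterate_succ']
    exact (hX.mapsLocalArm_armTo hf hloc (hz.orbit_ne_critical j)
      (armTo_mem_arms_iff.1 hi.2.1) hc).comp hi (hf.iterate j).continuousAt

theorem injOn_succ_or_pointsTowardOrbit_succ (hz : IsCharacteristicPt f c z) (hX : IsDendrite X)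
    (hf : Continuous f) (hloc : ∀ y ≠ c, ∃ U ∈ 𝓝 y, InjOn f U) (hG : G ∈ arms z)
    (hinj : InjOn f^[j] (insert z G)) (hcrit : ∀ k < j, c ∉ f^[k] '' G) :
    (InjOn f^[j + 1] (insert z G) ∧ ∀ k < j + 1, c ∉ f^[k] '' G) ∨
      PointsTowardOrbit f c z G (j + 1) := by
  obtain ⟨y, hy, rfl⟩ : ∃ y, y ≠ z ∧ G = armTo z y := hG
  have himage : f^[j] '' armTo z y ⊆ armTo (f^[j] z) (f^[j] y) := by
    refine subset_armTo (isPreconnected_armTo.image _ (hf.iterate j).continuousOn) ?_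
      (mem_image_of_mem _ (mem_armTo_self hy))
    rintro ⟨u, hu, huz⟩
    exact ne_of_mem_armTo hu (hinj (.inr hu) (mem_insert _ _) huz)
  by_cases hc : c ∈ armTo (f^[j] z) (f^[j] y)
  · right
    rw [armTo_eq_of_mem hc] at himage
    exact hz.pointsTowardOrbit_succ_of_critical hX hf hloc ⟨armTo_mem_arms_iff.2 hy,
      armTo_mem_arms_iff.2 (hz.orbit_ne_critical j).symm, univ, Filter.univ_mem, by
        rwa [inter_univ]⟩
  · left
    constructor
    · rw [Function.iterate_succ']
      refine (hX.injOn_insert_armTo hX hf hloc (hz.orbit_ne_critical j) hc).comp hinj ?_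
      rw [mapsTo_iff_image_subset, image_insert_eq]
      exact insert_subset_insert himage
    · intro k hk
      rcases Nat.lt_succ_iff_lt_or_eq.1 hk with hk | rfl
      exacts [hcrit k hk, fun h => hc (himage h)]

theorem injOn_or_pointsTowardOrbit (hz : IsCharacteristicPt f c z) (hX : IsDendrite X)
    (hf : Continuous f) (hloc : ∀ y ≠ c, ∃ U ∈ 𝓝 y, InjOn f U) (hper : ExactPeriod f z m)
    (hG : G ∈ arms z) (hj : j ≤ m) :
    (InjOn f^[j] (insert z G) ∧ ∀ k < j, c ∉ f^[k] '' G) ∨ PointsTowardOrbit f c z G j := by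
  induction j with
  | zero => exact .inl ⟨injOn_id _, by simp⟩
  | succ j ih =>
    rcases j.eq_zero_or_pos with rfl | hpos
    · exact hz.injOn_succ_or_pointsTowardOrbit_succ hX hf hloc hG (injOn_id _) (by simp)
    · rcases ih (by lia) with ⟨hinj, hcrit⟩ | htoward
      · exact hz.injOn_succ_or_pointsTowardOrbit_succ hX hf hloc hG hinj hcrit
      · exact .inr (hz.pointsTowardOrbit_succ hX hf hloc (hper.2.2 j hpos hj) htoward)

end IsCharacteristicPt

theorem images_of_global_arms_general [CompactSpace X] (hX : IsDendrite X) (hf : Continuous f)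
    (hloc : ∀ y ≠ c, ∃ U ∈ 𝓝 y, InjOn f U) (hz : IsCharacteristicPt f c z)
    (hper : ExactPeriod f z m) (hG : G ∈ arms z) :
    ((∀ k, k < m → c ∉ f^[k] '' G) ∧ MapsHomeoOn f^[m] G) ∨
      MapsLocalArm f^[m] z G (armTo z c) ∨ MapsLocalArm f^[m] z G (armTo z (f c)) := by
  have := hX.t2Space
  rcases hz.injOn_or_pointsTowardOrbit hX hf hloc hper hG le_rfl with
    ⟨hinj, hcrit⟩ | ⟨w, hw, hmaps⟩
  · obtain ⟨y, -, rfl⟩ : ∃ y, y ≠ z ∧ G = armTo z y := hG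
    exact .inl ⟨hcrit, mapsHomeoOn_of_injOn_isClosed (hf.iterate m)
      (hX.isClosed_insert_armTo z y) hinj (subset_insert _ _)⟩
  · have hwz : w ≠ f^[m] z := armTo_mem_arms_iff.1 hmaps.2.1
    rw [hper.2.1] at hmaps hwz
    obtain rfl | ⟨i, rfl⟩ := hw
    · exact .inr (.inr hmaps)
    · exact .inr (.inl (armTo_eq_of_mem (hz.orbit_mem i hwz) ▸ hmaps))

end CharacteristicPoints

namespace HubbardTree

variable {X : Type*} [TopologicalSpace X] {H : HubbardTree X}

theorem isDendrite (H : HubbardTree X) : IsDendrite X := by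
  have := H.compact
  have := H.t2
  have := H.conn
  have hopen (p x : X) : IsOpen (armTo p x) := isOpen_armTo_of_finite (H.arms_finite p) x
  have hpath (x y : X) (hxy : x ≠ y) : ∃ γ : Path x y, Function.Injective γ := by
    obtain ⟨h, -⟩ | ⟨-, γ, hγ, -⟩ := H.arc_isArc x y
    exacts [absurd h hxy, ⟨γ, hγ.injective⟩]
  refine ⟨hopen, fun x y hxy => ?_, hpath⟩
  obtain ⟨γ, hγ⟩ := hpath x y hxy
  exact exists_separates_of_finite_isEndpoint hopen H.endpoint_finite hγ

theorem exists_nhds_injOn (H : HubbardTree X) (x : X) (hx : x ≠ H.c0) : ∃ U ∈ 𝓝 x, InjOn H.f U := by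
  obtain ⟨U, hU, hxU, hemb⟩ := H.local_homeo x hx
  exact ⟨U, hU.mem_nhds hxU, injOn_iff_injective.2 hemb.injective⟩

theorem IsCharacteristic.isCharacteristicPt {z : X} (hz : H.IsCharacteristic z) :
    IsCharacteristicPt H.f H.c0 z := by
  obtain ⟨Cv, Cz, hCv, hCz, hne, hv, hc, horbit⟩ := hz
  rw [eq_armTo_of_mem_arms hCz hc] at hne horbit
  rw [eq_armTo_of_mem_arms hCv hv] at hne hv
  exact ⟨ne_of_mem_armTo hv, fun h => hne (armTo_eq_of_mem h).symm, horbit⟩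

end HubbardTree

/-- Proposition 3.3, "Images of Global Arms".
Let `z` be a characteristic periodic point of exact period `m` and `G` a global arm
at `z`. Then either no image `f^[k] G` for `0 ≤ k < m` contains the critical point
(and in particular the first return map maps `G` homeomorphically onto its image),
or the first return map sends the local arm in `G` to the local arm at `z` pointing
to the critical point or to the local arm at `z` pointing to the critical value. -/
theorem images_of_global_arms
    {X : Type*} [TopologicalSpace X] (H : HubbardTree X) (z : X) (m : ℕ)
    (hchar : H.IsCharacteristic z) (hper : ExactPeriod H.f z m)
    (G : Set X) (hG : G ∈ arms z) :
    ((∀ k : ℕ, k < m → H.c0 ∉ H.f^[k] '' G) ∧ MapsHomeoOn (H.f^[m]) G) ∨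
    MapsLocalArm (H.f^[m]) z G (armTo z H.c0) ∨
    MapsLocalArm (H.f^[m]) z G (armTo z H.c1) := by
  have := H.compact
  exact images_of_global_arms_general H.isDendrite H.cont H.exists_nhds_injOn
    hchar.isCharacteristicPt hper hG

end HubbardTrees
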